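/- Let Φ be a finite set of proposition symbols. Then ML(⊻) ≤ EMDL: for every formula φ ∈ ML(⊻)(Φ) there is a formula η ∈ EMDL(Φ) such that ‖φ‖ = ‖η‖, i.e., for every Kripke model K over Φ and every team T of K, K,T ⊨ φ if and only if K,T ⊨ η. -/

import Mathlib

/-!
Intuitionistic disjunction commutes with every other connective, so an `ML(⊻)`-formula is
equivalent to `ψ₁ ⊻ ⋯ ⊻ ψₙ` with `Ψ = {ψ₁, …, ψₙ} ⊆ ML`. By flatness, whether a team satisfies it
depends only on the set of `Ψ`-types realised in the team, and the condition is closed under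
subsets. A downward closed condition on sets of types says that, for each of the finitely many
families `X` of types violating it, some type in `X` is not realised.

This last property is expressible in `EMDL`: the dependence atoms `dep(ψ)`, `ψ ∈ Ψ`, say together
that a team realises at most one type, so a `k`-fold disjunction of their conjunction says that it
realises at most `k` types; and some type in `X` is missing iff the part of the team with types
in `X` realises at most `|X| - 1` types.
-/

namespace MDLTeam

/-- A Kripke model over a set `Φ` of proposition symbols: a set `W` of worlds,
an accessibility relation `R` and a valuation `V`.  A team of `K` is a subset of `K.W`. -/
structure Kripke (Φ : Type) : Type 1 where
  W : Type
  R : W → W → Prop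
  V : Φ → Set W

namespace Kripke

variable {Φ : Type}

/-- `R[T] = {v | ∃ w ∈ T, w R v}` -/
def img (K : Kripke Φ) (T : Set K.W) : Set K.W := {v | ∃ w ∈ T, K.R w v}

/-- `R⁻¹[S] = {w | ∃ v ∈ S, w R v}` -/
def pre (K : Kripke Φ) (S : Set K.W) : Set K.W := {w | ∃ v ∈ S, K.R w v}

/-- `T[R]S` iff `S ⊆ R[T]` and `T ⊆ R⁻¹[S]`. -/
def trs (K : Kripke Φ) (T S : Set K.W) : Prop := S ⊆ K.img T ∧ T ⊆ K.pre S

end Kripke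

/-- Formulas of modal logic `ML(Φ)` in negation normal form. -/
inductive MLFrm (Φ : Type) : Type
  | atom (p : Φ)
  | natom (p : Φ)
  | and (φ ψ : MLFrm Φ)
  | or (φ ψ : MLFrm Φ)
  | dia (φ : MLFrm Φ)
  | box (φ : MLFrm Φ)
  deriving DecidableEq

namespace MLFrm

variable {Φ : Type}

/-- Team semantics for `ML`. -/
def sat (K : Kripke Φ) : MLFrm Φ → Set K.W → Prop
  | atom p, T => T ⊆ K.V p
  | natom p, T => T ∩ K.V p = ∅
  | and φ ψ, T => sat K φ T ∧ sat K ψ T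
  | or φ ψ, T => ∃ T₁ T₂, T = T₁ ∪ T₂ ∧ sat K φ T₁ ∧ sat K ψ T₂
  | dia φ, T => ∃ S, K.trs T S ∧ sat K φ S
  | box φ, T => sat K φ (K.img T)

/-- Standard (pointwise) Kripke semantics for `ML`. -/
def psat (K : Kripke Φ) : MLFrm Φ → K.W → Prop
  | atom p, w => w ∈ K.V p
  | natom p, w => w ∉ K.V p
  | and φ ψ, w => psat K φ w ∧ psat K ψ w
  | or φ ψ, w => psat K φ w ∨ psat K ψ w
  | dia φ, w => ∃ v, K.R w v ∧ psat K φ v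
  | box φ, w => ∀ v, K.R w v → psat K φ v

/-- Modal depth. -/
def md : MLFrm Φ → ℕ
  | atom _ => 0
  | natom _ => 0
  | and φ ψ => max (md φ) (md ψ)
  | or φ ψ => max (md φ) (md ψ)
  | dia φ => md φ + 1
  | box φ => md φ + 1

end MLFrm

/-- Formulas of `ML(⊻)(Φ)`: modal logic with intuitionistic disjunction. -/
inductive MLI (Φ : Type) : Type
  | atom (p : Φ)
  | natom (p : Φ)
  | and (φ ψ : MLI Φ)
  | or (φ ψ : MLI Φ)
  | dia (φ : MLI Φ)
  | box (φ : MLI Φ)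
  | idis (φ ψ : MLI Φ)
  deriving DecidableEq

namespace MLI

variable {Φ : Type}

/-- Team semantics for `ML(⊻)`. -/
def sat (K : Kripke Φ) : MLI Φ → Set K.W → Prop
  | atom p, T => T ⊆ K.V p
  | natom p, T => T ∩ K.V p = ∅
  | and φ ψ, T => sat K φ T ∧ sat K ψ T
  | or φ ψ, T => ∃ T₁ T₂, T = T₁ ∪ T₂ ∧ sat K φ T₁ ∧ sat K ψ T₂
  | dia φ, T => ∃ S, K.trs T S ∧ sat K φ S
  | box φ, T => sat K φ (K.img T)
  | idis φ ψ, T => sat K φ T ∨ sat K ψ T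

/-- Modal depth. -/
def md : MLI Φ → ℕ
  | atom _ => 0
  | natom _ => 0
  | and φ ψ => max (md φ) (md ψ)
  | or φ ψ => max (md φ) (md ψ)
  | dia φ => md φ + 1
  | box φ => md φ + 1
  | idis φ ψ => max (md φ) (md ψ)

/-- The number of occurrences of the connective `⊻` in a formula. -/
def occIdis : MLI Φ → ℕ
  | atom _ => 0
  | natom _ => 0
  | and φ ψ => occIdis φ + occIdis ψ
  | or φ ψ => occIdis φ + occIdis ψ
  | dia φ => occIdis φ
  | box φ => occIdis φ
  | idis φ ψ => occIdis φ + occIdis ψ + 1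

/-- The number of symbols in a formula. -/
def size : MLI Φ → ℕ
  | atom _ => 1
  | natom _ => 2
  | and φ ψ => size φ + size ψ + 1
  | or φ ψ => size φ + size ψ + 1
  | dia φ => size φ + 1
  | box φ => size φ + 1
  | idis φ ψ => size φ + size ψ + 1

end MLI

/-- Formulas of extended modal dependence logic `EMDL(Φ)`: `ML` extended by
dependence atoms `dep(ψ₁,…,ψₙ,θ)` with `ψ₁,…,ψₙ,θ ∈ ML(Φ)`. -/
inductive EMDL (Φ : Type) : Type
  | atom (p : Φ)
  | natom (p : Φ)
  | and (φ ψ : EMDL Φ)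
  | or (φ ψ : EMDL Φ)
  | dia (φ : EMDL Φ)
  | box (φ : EMDL Φ)
  | dep (l : List (MLFrm Φ)) (θ : MLFrm Φ)

namespace EMDL

variable {Φ : Type}

/-- Team semantics for `EMDL`. -/
def sat (K : Kripke Φ) : EMDL Φ → Set K.W → Prop
  | atom p, T => T ⊆ K.V p
  | natom p, T => T ∩ K.V p = ∅
  | and φ ψ, T => sat K φ T ∧ sat K ψ T
  | or φ ψ, T => ∃ T₁ T₂, T = T₁ ∪ T₂ ∧ sat K φ T₁ ∧ sat K ψ T₂
  | dia φ, T => ∃ S, K.trs T S ∧ sat K φ S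
  | box φ, T => sat K φ (K.img T)
  | dep l θ, T => ∀ w ∈ T, ∀ v ∈ T,
      (∀ ψ ∈ l, (MLFrm.sat K ψ {w} ↔ MLFrm.sat K ψ {v})) →
      (MLFrm.sat K θ {w} ↔ MLFrm.sat K θ {v})

end EMDL

/-- `k`-bisimilarity of pointed models. -/
def bisim {Φ : Type} (K K' : Kripke Φ) : ℕ → K.W → K'.W → Prop
  | 0, w, w' => ∀ p, w ∈ K.V p ↔ w' ∈ K'.V p
  | k + 1, w, w' =>
      (∀ p, w ∈ K.V p ↔ w' ∈ K'.V p) ∧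
      (∀ v, K.R w v → ∃ v', K'.R w' v' ∧ bisim K K' k v v') ∧
      (∀ v', K'.R w' v' → ∃ v, K.R w v ∧ bisim K K' k v v')

/-- Team `k`-bisimilarity: `K,T ⇌ₖ K',T'`. -/
def tbisim {Φ : Type} (K K' : Kripke Φ) (k : ℕ) (T : Set K.W) (T' : Set K'.W) : Prop :=
  (∀ w ∈ T, ∃ w' ∈ T', bisim K K' k w w') ∧
  (∀ w' ∈ T', ∃ w ∈ T, bisim K K' k w w')

/-- `M(φ,K)`: the set of maximal teams satisfying `φ` in `K` (for `ML(⊻)`). -/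
def MLI.Mset {Φ : Type} (K : Kripke Φ) (φ : MLI Φ) : Set (Set K.W) :=
  {T | MLI.sat K φ T ∧ ∀ S, MLI.sat K φ S → T ⊆ S → S = T}

/-- `N(φ,K)`: the family of minimal teams not satisfying `φ` in `K` (for `ML(⊻)`). -/
def MLI.Nset {Φ : Type} (K : Kripke Φ) (φ : MLI Φ) : Set (Set K.W) :=
  {T | ¬ MLI.sat K φ T ∧ ∀ S, ¬ MLI.sat K φ S → S ⊆ T → S = T}

/-- The upper dimension `Dim(φ)` of an `ML(⊻)`-formula: the least `m` such that
`|M(φ,K)| ≤ m` for every Kripke model `K` over `Φ`. -/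
noncomputable def MLI.Dim {Φ : Type} (φ : MLI Φ) : ℕ :=
  sInf {m : ℕ | ∀ K : Kripke Φ, (MLI.Mset K φ).Finite ∧ (MLI.Mset K φ).ncard ≤ m}

/-- The lower dimension `dim(φ)` of an `ML(⊻)`-formula: the least `n` such that
`|T| ≤ n` for every Kripke model `K` over `Φ` and every `T ∈ N(φ,K)`. -/
noncomputable def MLI.ldim {Φ : Type} (φ : MLI Φ) : ℕ :=
  sInf {n : ℕ | ∀ K : Kripke Φ, ∀ T ∈ MLI.Nset K φ, T.Finite ∧ T.ncard ≤ n}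

/-- `M(φ,K)`: the set of maximal teams satisfying `φ` in `K` (for `EMDL`). -/
def EMDL.Mset {Φ : Type} (K : Kripke Φ) (φ : EMDL Φ) : Set (Set K.W) :=
  {T | EMDL.sat K φ T ∧ ∀ S, EMDL.sat K φ S → T ⊆ S → S = T}

/-- The upper dimension `Dim(φ)` of an `EMDL`-formula. -/
noncomputable def EMDL.Dim {Φ : Type} (φ : EMDL Φ) : ℕ :=
  sInf {m : ℕ | ∀ K : Kripke Φ, (EMDL.Mset K φ).Finite ∧ (EMDL.Mset K φ).ncard ≤ m}

/-- The `Ψ`-type of a state: `type_Ψ(K,w) = {ψ ∈ Ψ | K,w ⊨ ψ}`. -/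
def typeSet {Φ : Type} (K : Kripke Φ) (Ψ : Set (MLFrm Φ)) (w : K.W) : Set (MLFrm Φ) :=
  {ψ | ψ ∈ Ψ ∧ MLFrm.psat K ψ w}

/-- `tset_Ψ(K,T) = {type_Ψ(K,w) | w ∈ T}`. -/
def tset {Φ : Type} (K : Kripke Φ) (Ψ : Set (MLFrm Φ)) (T : Set K.W) : Set (Set (MLFrm Φ)) :=
  typeSet K Ψ '' T

theorem ncard_image_le_succ_iff {α β : Type*} {f : α → β} {T : Set α} {k : ℕ} :
    (f '' T).ncard ≤ k + 1 ↔
      ∃ T₁ T₂, T = T₁ ∪ T₂ ∧ (f '' T₁).Subsingleton ∧ (f '' T₂).ncard ≤ k := by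
  constructor
  · intro h
    rcases T.eq_empty_or_nonempty with rfl | ⟨a, ha⟩
    · exact ⟨∅, ∅, by simp⟩
    · refine ⟨T ∩ f ⁻¹' {f a}, T \ f ⁻¹' {f a}, (Set.inter_union_sdiff _ _).symm, ?_, ?_⟩
      · rw [Set.image_inter_preimage]
        exact Set.subsingleton_singleton.anti Set.inter_subset_right
      · rw [Set.image_sdiff_preimage, Set.ncard_sdiff_singleton_of_mem (Set.mem_image_of_mem f ha)]
        omega
  · rintro ⟨T₁, T₂, rfl, h₁, h₂⟩
    have hone : (f '' T₁).ncard ≤ 1 :=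
      (Set.ncard_le_one h₁.finite).2 fun _ ha _ hb => h₁ ha hb
    calc (f '' (T₁ ∪ T₂)).ncard = (f '' T₁ ∪ f '' T₂).ncard := by rw [Set.image_union]
      _ ≤ (f '' T₁).ncard + (f '' T₂).ncard := Set.ncard_union_le _ _
      _ ≤ 1 + k := Nat.add_le_add hone h₂
      _ = k + 1 := Nat.add_comm _ _

theorem not_subset_image_iff {α β : Type*} {f : α → β} {T : Set α} {X : Set β}
    (hT : (f '' T).Finite) (hX : X.Finite) :
    ¬ X ⊆ f '' T ↔
      ∃ T₁ T₂, T = T₁ ∪ T₂ ∧ Disjoint X (f '' T₁) ∧ (f '' T₂).ncard < X.ncard := by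
  constructor
  · intro h
    refine ⟨T \ f ⁻¹' X, T ∩ f ⁻¹' X, (Set.sdiff_union_inter _ _).symm, ?_, ?_⟩
    · rw [Set.image_sdiff_preimage]
      exact Set.disjoint_sdiff_right
    · rw [Set.image_inter_preimage]
      exact Set.ncard_lt_ncard
        ⟨Set.inter_subset_right, fun hsub => h (hsub.trans Set.inter_subset_left)⟩ hX
  · rintro ⟨T₁, T₂, rfl, hdisj, hcard⟩ hsub
    rw [Set.image_union] at hT hsub
    exact hcard.not_ge
      (Set.ncard_le_ncard (hdisj.subset_right_of_subset_union hsub)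
        (hT.subset Set.subset_union_right))

namespace MLFrm

variable {Φ : Type}

theorem sat_iff_forall_psat {K : Kripke Φ} {ψ : MLFrm Φ} {T : Set K.W} :
    sat K ψ T ↔ ∀ w ∈ T, psat K ψ w := by
  induction ψ generalizing T with
  | atom p => exact Iff.rfl
  | natom p => exact Set.disjoint_iff_inter_eq_empty.symm.trans Set.disjoint_left
  | and ψ χ ihψ ihχ => simp only [sat, psat, ihψ, ihχ, forall_and]
  | or ψ χ ihψ ihχ =>
    simp only [sat, psat, ihψ, ihχ]
    constructor
    · rintro ⟨T₁, T₂, rfl, h₁, h₂⟩ w (hw | hw)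
      · exact Or.inl (h₁ w hw)
      · exact Or.inr (h₂ w hw)
    · intro h
      refine ⟨{w ∈ T | psat K ψ w}, {w ∈ T | psat K χ w}, ?_, fun w hw => hw.2, fun w hw => hw.2⟩
      rw [← Set.sep_or]
      exact (Set.sep_eq_self_iff_mem_true.2 h).symm
  | dia ψ ih =>
    simp only [sat, psat, ih]
    constructor
    · rintro ⟨S, ⟨-, hTS⟩, hS⟩ w hw
      obtain ⟨v, hv, hwv⟩ := hTS hw
      exact ⟨v, hwv, hS v hv⟩
    · intro h
      refine ⟨{v ∈ K.img T | psat K ψ v}, ⟨fun v hv => hv.1, fun w hw => ?_⟩, fun v hv => hv.2⟩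
      obtain ⟨v, hwv, hv⟩ := h w hw
      exact ⟨v, ⟨⟨w, hw, hwv⟩, hv⟩, hwv⟩
  | box ψ ih =>
    simp only [sat, psat, ih]
    exact ⟨fun h w hw v hwv => h v ⟨w, hw, hwv⟩, fun h v ⟨w, hw, hwv⟩ => h w hw v hwv⟩

theorem sat_singleton {K : Kripke Φ} {ψ : MLFrm Φ} {w : K.W} : sat K ψ {w} ↔ psat K ψ w := by
  simp only [sat_iff_forall_psat, Set.mem_singleton_iff, forall_eq]

/-- The inclusion of `ML` into `EMDL`. -/
def toEMDL : MLFrm Φ → EMDL Φ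
  | atom p => .atom p
  | natom p => .natom p
  | and ψ χ => .and ψ.toEMDL χ.toEMDL
  | or ψ χ => .or ψ.toEMDL χ.toEMDL
  | dia ψ => .dia ψ.toEMDL
  | box ψ => .box ψ.toEMDL

theorem sat_toEMDL {K : Kripke Φ} {ψ : MLFrm Φ} {T : Set K.W} :
    EMDL.sat K ψ.toEMDL T ↔ sat K ψ T := by
  induction ψ generalizing T <;> simp only [toEMDL, EMDL.sat, sat, *]

/-- The negation of an `ML`-formula, in negation normal form. -/
def neg : MLFrm Φ → MLFrm Φ
  | atom p => .natom p
  | natom p => .atom p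
  | and ψ χ => .or ψ.neg χ.neg
  | or ψ χ => .and ψ.neg χ.neg
  | dia ψ => .box ψ.neg
  | box ψ => .dia ψ.neg

theorem psat_neg {K : Kripke Φ} {ψ : MLFrm Φ} {w : K.W} : psat K ψ.neg w ↔ ¬ psat K ψ w := by
  induction ψ generalizing w <;>
    simp only [neg, psat, *, not_and_or, not_or, not_exists, not_forall, not_not,
      imp_iff_not_or]

/-- A property of pointed models is definable if some `ML`-formula expresses it under the
pointwise semantics. -/
def Definable (q : ∀ K : Kripke Φ, K.W → Prop) : Prop :=
  ∃ ψ : MLFrm Φ, ∀ (K : Kripke Φ) (w : K.W), psat K ψ w ↔ q K w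

theorem definable_psat (ψ : MLFrm Φ) : Definable fun K w => psat K ψ w :=
  ⟨ψ, fun _ _ => Iff.rfl⟩

theorem definable_true [Nonempty Φ] : Definable fun (K : Kripke Φ) (_ : K.W) => True :=
  let ⟨p⟩ := ‹Nonempty Φ›
  ⟨.or (.atom p) (.natom p), fun _ _ => iff_true_intro (Classical.em _)⟩

namespace Definable

variable {q r : ∀ K : Kripke Φ, K.W → Prop}

theorem not (hq : Definable q) : Definable fun K w => ¬ q K w :=
  let ⟨ψ, hψ⟩ := hq
  ⟨ψ.neg, fun K w => psat_neg.trans (hψ K w).not⟩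

theorem and (hq : Definable q) (hr : Definable r) : Definable fun K w => q K w ∧ r K w :=
  let ⟨ψ, hψ⟩ := hq
  let ⟨χ, hχ⟩ := hr
  ⟨.and ψ χ, fun K w => and_congr (hψ K w) (hχ K w)⟩

theorem ball [Nonempty Φ] {ι : Type*} {s : Set ι} (hs : s.Finite)
    {q : ι → ∀ K : Kripke Φ, K.W → Prop} (hq : ∀ i ∈ s, Definable (q i)) :
    Definable fun K w => ∀ i ∈ s, q i K w := by
  induction s, hs using Set.Finite.induction_on with
  | empty => simpa using definable_true
  | insert _ _ ih =>
    rw [Set.forall_mem_insert] at hq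
    simpa only [Set.forall_mem_insert] using hq.1.and (ih hq.2)

end Definable

theorem definable_typeSet_eq [Nonempty Φ] {Ψ t : Set (MLFrm Φ)} (hΨ : Ψ.Finite) (ht : t ⊆ Ψ) :
    Definable fun K w => typeSet K Ψ w = t := by
  have hsep (K : Kripke Φ) (w : K.W) :
      typeSet K Ψ w = t ↔ ∀ ψ ∈ Ψ, (psat K ψ w ↔ ψ ∈ t) := by
    refine Set.ext_iff.trans (forall_congr' fun ψ => ?_)
    have := @ht ψ
    simp only [typeSet, Set.mem_ofPred_eq]
    tauto
  simp only [hsep]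
  refine Definable.ball hΨ fun ψ _ => ?_
  by_cases hψ : ψ ∈ t
  · simpa only [hψ, iff_true] using definable_psat ψ
  · simpa only [hψ, iff_false] using (definable_psat ψ).not

end MLFrm

section Types

variable {Φ : Type} {K : Kripke Φ} {Ψ : Set (MLFrm Φ)} {T : Set K.W}

theorem tset_subset_powerset : tset K Ψ T ⊆ 𝒫 Ψ :=
  Set.image_subset_iff.2 fun _ _ _ hψ => hψ.1

theorem finite_tset (hΨ : Ψ.Finite) : (tset K Ψ T).Finite :=
  hΨ.powerset.subset tset_subset_powerset

theorem forall_mem_tset_iff_sat {ψ : MLFrm Φ} (hψ : ψ ∈ Ψ) :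
    (∀ t ∈ tset K Ψ T, ψ ∈ t) ↔ MLFrm.sat K ψ T := by
  simp only [tset, Set.forall_mem_image, typeSet, Set.mem_ofPred_eq, hψ, true_and,
    MLFrm.sat_iff_forall_psat]

theorem subsingleton_tset_iff :
    (tset K Ψ T).Subsingleton ↔
      ∀ ψ ∈ Ψ, ∀ w ∈ T, ∀ v ∈ T, (MLFrm.psat K ψ w ↔ MLFrm.psat K ψ v) := by
  simp only [tset, Set.Subsingleton, Set.forall_mem_image, typeSet, Set.ext_iff, Set.mem_ofPred_eq,
    and_congr_right_iff]
  exact ⟨fun h ψ hψ w hw v hv => h hw hv ψ hψ, fun h w hw v hv ψ hψ => h ψ hψ w hw v hv⟩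

end Types

namespace EMDL

variable {Φ : Type}

/-- A property of teams is definable if some `EMDL`-formula expresses it. -/
def Definable (P : ∀ K : Kripke Φ, Set K.W → Prop) : Prop :=
  ∃ η : EMDL Φ, ∀ (K : Kripke Φ) (T : Set K.W), sat K η T ↔ P K T

namespace Definable

variable {P Q : ∀ K : Kripke Φ, Set K.W → Prop}

theorem congr (hP : Definable P) (h : ∀ K T, P K T ↔ Q K T) : Definable Q :=
  let ⟨η, hη⟩ := hP
  ⟨η, fun K T => (hη K T).trans (h K T)⟩

theorem of_forall_mem {q : ∀ K : Kripke Φ, K.W → Prop} (hq : MLFrm.Definable q) :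
    Definable fun K T => ∀ w ∈ T, q K w :=
  let ⟨ψ, hψ⟩ := hq
  ⟨ψ.toEMDL, fun K T => by simp only [MLFrm.sat_toEMDL, MLFrm.sat_iff_forall_psat, hψ]⟩

theorem and (hP : Definable P) (hQ : Definable Q) : Definable fun K T => P K T ∧ Q K T :=
  let ⟨η, hη⟩ := hP
  let ⟨θ, hθ⟩ := hQ
  ⟨.and η θ, fun K T => and_congr (hη K T) (hθ K T)⟩

theorem or (hP : Definable P) (hQ : Definable Q) :
    Definable fun K T => ∃ T₁ T₂, T = T₁ ∪ T₂ ∧ P K T₁ ∧ Q K T₂ :=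
  let ⟨η, hη⟩ := hP
  let ⟨θ, hθ⟩ := hQ
  ⟨.or η θ, fun K T => by simp only [sat, hη, hθ]⟩

theorem ball [Nonempty Φ] {ι : Type*} {s : Set ι} (hs : s.Finite)
    {P : ι → ∀ K : Kripke Φ, Set K.W → Prop} (hP : ∀ i ∈ s, Definable (P i)) :
    Definable fun K T => ∀ i ∈ s, P i K T := by
  induction s, hs using Set.Finite.induction_on with
  | empty => simpa using of_forall_mem MLFrm.definable_true
  | insert _ _ ih =>
    rw [Set.forall_mem_insert] at hP
    simpa only [Set.forall_mem_insert] using hP.1.and (ih hP.2)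

end Definable

theorem definable_psat_iff_psat (ψ : MLFrm Φ) :
    Definable fun K T => ∀ w ∈ T, ∀ v ∈ T, (MLFrm.psat K ψ w ↔ MLFrm.psat K ψ v) :=
  ⟨.dep [] ψ, fun K T => by simp [sat, MLFrm.sat_singleton]⟩

section Types

variable [Nonempty Φ] {Ψ : Set (MLFrm Φ)}

theorem definable_subsingleton_tset (hΨ : Ψ.Finite) :
    Definable fun K T => (tset K Ψ T).Subsingleton := by
  simpa only [subsingleton_tset_iff] using Definable.ball hΨ fun ψ _ => definable_psat_iff_psat ψ

theorem definable_ncard_tset_le (hΨ : Ψ.Finite) (k : ℕ) :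
    Definable fun K T => (tset K Ψ T).ncard ≤ k := by
  induction k with
  | zero =>
    refine (Definable.of_forall_mem MLFrm.definable_true.not).congr fun K T => ?_
    rw [Nat.le_zero, Set.ncard_eq_zero (finite_tset hΨ), tset, Set.image_eq_empty,
      Set.eq_empty_iff_forall_notMem]
    simp only [not_true_eq_false]
  | succ k ih =>
    exact ((definable_subsingleton_tset hΨ).or ih).congr fun _ _ =>
      ncard_image_le_succ_iff.symm

theorem definable_disjoint_tset (hΨ : Ψ.Finite) {X : Set (Set (MLFrm Φ))} (hX : X ⊆ 𝒫 Ψ) :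
    Definable fun K T => Disjoint X (tset K Ψ T) := by
  refine (Definable.ball (hΨ.powerset.subset hX) fun t ht => Definable.of_forall_mem
    (MLFrm.definable_typeSet_eq hΨ (hX ht)).not).congr fun K T => ?_
  simp only [Set.disjoint_left, tset, Set.mem_image, not_exists, not_and]

theorem definable_not_subset_tset (hΨ : Ψ.Finite) {X : Set (Set (MLFrm Φ))} (hX : X ⊆ 𝒫 Ψ)
    (hne : X.Nonempty) : Definable fun K T => ¬ X ⊆ tset K Ψ T := by
  have hXfin : X.Finite := hΨ.powerset.subset hX
  have hcard : Definable fun K T => (tset K Ψ T).ncard < X.ncard :=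
    (definable_ncard_tset_le hΨ (X.ncard - 1)).congr fun K T =>
      Nat.le_sub_one_iff_lt ((Set.ncard_pos hXfin).2 hne)
  exact ((definable_disjoint_tset hΨ hX).or hcard).congr fun K T =>
    (not_subset_image_iff (finite_tset hΨ) hXfin).symm

theorem definable_tset_mem_of_isLowerSet (hΨ : Ψ.Finite) {D : Set (Set (Set (MLFrm Φ)))}
    (hD : IsLowerSet D) (hempty : ∅ ∈ D) : Definable fun K T => tset K Ψ T ∈ D := by
  have hfin : (𝒫 𝒫 Ψ \ D).Finite := hΨ.powerset.powerset.sdiff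
  have hne {X} (hX : X ∈ 𝒫 𝒫 Ψ \ D) : X.Nonempty :=
    Set.nonempty_iff_ne_empty.2 fun h => hX.2 (h ▸ hempty)
  refine (Definable.ball hfin fun X hX =>
    definable_not_subset_tset hΨ hX.1 (hne hX)).congr fun K T =>
      ⟨fun h => ?_, fun h X hX hsub => hX.2 (hD hsub h)⟩
  by_contra hmem
  exact h (tset K Ψ T) ⟨tset_subset_powerset, hmem⟩ subset_rfl

end Types

end EMDL

namespace MLI

variable {Φ : Type}

theorem nonempty_symbols : MLI Φ → Nonempty Φ
  | atom p | natom p => ⟨p⟩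
  | and φ _ | or φ _ | dia φ | box φ | idis φ _ => φ.nonempty_symbols

/-- The `ML`-formulas whose intuitionistic disjunction is the `⊻`-normal form of a formula,
obtained by pulling `⊻` out of all other connectives. -/
def disjuncts : MLI Φ → Set (MLFrm Φ)
  | atom p => {.atom p}
  | natom p => {.natom p}
  | and φ ψ => Set.image2 .and φ.disjuncts ψ.disjuncts
  | or φ ψ => Set.image2 .or φ.disjuncts ψ.disjuncts
  | dia φ => .dia '' φ.disjuncts
  | box φ => .box '' φ.disjuncts
  | idis φ ψ => φ.disjuncts ∪ ψ.disjuncts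

theorem finite_disjuncts : ∀ φ : MLI Φ, φ.disjuncts.Finite
  | atom _ | natom _ => Set.finite_singleton _
  | and φ ψ | or φ ψ => φ.finite_disjuncts.image2 _ ψ.finite_disjuncts
  | dia φ | box φ => φ.finite_disjuncts.image _
  | idis φ ψ => φ.finite_disjuncts.union ψ.finite_disjuncts

theorem nonempty_disjuncts : ∀ φ : MLI Φ, φ.disjuncts.Nonempty
  | atom _ | natom _ => Set.singleton_nonempty _
  | and φ ψ | or φ ψ => φ.nonempty_disjuncts.image2 ψ.nonempty_disjuncts
  | dia φ | box φ => φ.nonempty_disjuncts.image _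
  | idis φ _ => φ.nonempty_disjuncts.inl

theorem sat_iff_exists_mem_disjuncts {K : Kripke Φ} {φ : MLI Φ} {T : Set K.W} :
    sat K φ T ↔ ∃ ψ ∈ φ.disjuncts, MLFrm.sat K ψ T := by
  induction φ generalizing T with
  | atom p | natom p => simp only [disjuncts, Set.mem_singleton_iff, exists_eq_left, sat, MLFrm.sat]
  | and φ ψ ihφ ihψ =>
    simp only [disjuncts, Set.exists_mem_image2, sat, MLFrm.sat, ihφ, ihψ]
    grind
  | or φ ψ ihφ ihψ =>
    simp only [disjuncts, Set.exists_mem_image2, sat, MLFrm.sat, ihφ, ihψ]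
    grind
  | dia φ ih =>
    simp only [disjuncts, Set.exists_mem_image, sat, MLFrm.sat, ih]
    grind
  | box φ ih => simp only [disjuncts, Set.exists_mem_image, sat, MLFrm.sat, ih]
  | idis φ ψ ihφ ihψ => simp only [disjuncts, Set.mem_union, or_and_right, exists_or, sat, ihφ, ihψ]

end MLI

theorem mli_le_emdl_general {Φ : Type} (φ : MLI Φ) :
    ∃ η : EMDL Φ, ∀ (K : Kripke Φ) (T : Set K.W), MLI.sat K φ T ↔ EMDL.sat K η T := by
  have := φ.nonempty_symbols
  let D : Set (Set (Set (MLFrm Φ))) := {S | ∃ ψ ∈ φ.disjuncts, ∀ t ∈ S, ψ ∈ t}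
  have hD : IsLowerSet D := fun _ _ hsub ⟨ψ, hψ, h⟩ => ⟨ψ, hψ, fun t ht => h t (hsub ht)⟩
  have hempty : ∅ ∈ D := φ.nonempty_disjuncts.imp fun _ hψ => ⟨hψ, fun _ ht => ht.elim⟩
  obtain ⟨η, hη⟩ := EMDL.definable_tset_mem_of_isLowerSet φ.finite_disjuncts hD hempty
  refine ⟨η, fun K T => ?_⟩
  calc MLI.sat K φ T ↔ ∃ ψ ∈ φ.disjuncts, MLFrm.sat K ψ T := MLI.sat_iff_exists_mem_disjuncts
    _ ↔ tset K φ.disjuncts T ∈ D :=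
      exists_congr fun _ => and_congr_right fun hψ => (forall_mem_tset_iff_sat hψ).symm
    _ ↔ EMDL.sat K η T := (hη K T).symm

/-- Over a finite `Φ`, `ML(⊻) ≤ EMDL`: every `ML(⊻)(Φ)`-formula has an
equivalent `EMDL(Φ)`-formula. -/
theorem mli_le_emdl {Φ : Type} [Fintype Φ] (φ : MLI Φ) :
    ∃ η : EMDL Φ, ∀ (K : Kripke Φ) (T : Set K.W),
      MLI.sat K φ T ↔ EMDL.sat K η T :=
  mli_le_emdl_general φ

end MDLTeam
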